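/- arXiv:0903.2374 — 2 statements merged into one kernel-verified Lean document; each statement's English description precedes it below -/
import Mathlib

section
/- Let κ be an infinite cardinal and let τ = max(κ⁺, κ^{ℵ₀}). There exists a continuous quadratic functional P : ℓ₁(τ) → ℂ (over the complex field) which has a maximal zero subspace of density κ and another maximal zero subspace of density τ. -/
noncomputable section

universe u

/-- The complex Banach space `ℓ₁(Γ)`. -/
abbrev ell1 (Γ : Type u) : Type u := lp (fun _ : Γ => ℂ) 1

/-- The density character of a topological space: the smallest cardinality of a dense
subset. -/
def densityChar (α : Type u) [TopologicalSpace α] : Cardinal.{u} :=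
  sInf {c : Cardinal.{u} | ∃ s : Set α, Dense s ∧ Cardinal.mk s = c}

/-- `Y` is a maximal zero subspace of `P`: `P` vanishes on `Y`, and `Y` is maximal with
respect to inclusion among the subspaces on which `P` vanishes. -/
def IsMaximalZeroSubspace {X : Type u} [NormedAddCommGroup X] [Module ℂ X]
    (P : X → ℂ) (Y : Submodule ℂ X) : Prop :=
  (∀ y ∈ Y, P y = 0) ∧
  ∀ Z : Submodule ℂ X, (∀ z ∈ Z, P z = 0) → Y ≤ Z → Z = Y

/-!
Choose `S ⊆ Γ` of cardinality `κ`, and let `B` be the adjacency form of a graph on `Γ` all of whose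
edges run between `S` and `Sᶜ`. The subspaces `ℓ₁(S)` and `ℓ₁(Sᶜ)` are then self-orthogonal and
together span `ℓ₁(Γ)`, which makes the orthogonal complement of each a maximal zero subspace.

The complement of `ℓ₁(Sᶜ)` contains `ℓ₁(Sᶜ)`, so it has density `#Γ`. A vector `x` of the
complement of `ℓ₁(S)` sums to zero over the neighborhood of every vertex of `S`. Since `#Γ ≤ 2 ^ κ`,
the points of `Γ` can be coded by subsets of `S`, and the cylinders of `2 ^ S`, of which there are
only `κ`, serve as neighborhoods. Cylinders around `c ∉ S` avoid any prescribed finite set of other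
points, in particular one carrying almost all of the norm of `x`; hence `x c = 0`. So the complement
of `ℓ₁(S)` is `ℓ₁(S)` itself, of density `κ`.
-/

section BilinForm

variable {R M : Type*} [CommRing R] [AddCommGroup M] [Module R M]
  {B : LinearMap.BilinForm R M} {V W : Submodule R M}

lemma bilinForm_eq_zero_of_forall_self_eq_zero [NoZeroDivisors R] [NeZero (2 : R)]
    (hB : B.IsSymm) (hV : ∀ v ∈ V, B v v = 0) {x y : M} (hx : x ∈ V) (hy : y ∈ V) :
    B x y = 0 := by
  have polarization : 2 * B x y = B (x + y) (x + y) - B x x - B y y := by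
    simp only [map_add, LinearMap.add_apply, hB.eq y x]
    ring
  rw [hV _ (V.add_mem hx hy), hV x hx, hV y hy, sub_zero, sub_zero] at polarization
  exact (mul_eq_zero.mp polarization).resolve_left two_ne_zero

lemma bilinForm_self_eq_zero_of_mem_orthogonal (hB : B.IsSymm) (hV : V ≤ B.orthogonal V)
    (hW : W ≤ B.orthogonal W) (hVW : Codisjoint V W) {x : M} (hx : x ∈ B.orthogonal V) :
    B x x = 0 := by
  obtain ⟨v, w, hv, hw, rfl⟩ := Submodule.codisjoint_iff_exists_add_eq.mp hVW x
  have hvv : B v v = 0 := hV hv v hv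
  have hww : B w w = 0 := hW hw w hw
  have hvw : B v w = 0 := by
    simpa only [map_add, hvv, zero_add] using hx v hv
  simp [hvv, hww, hvw, hB.eq w v]

end BilinForm

theorem isMaximalZeroSubspace_orthogonal {X : Type u} [NormedAddCommGroup X] [Module ℂ X]
    {B : LinearMap.BilinForm ℂ X} (hB : B.IsSymm) {V W : Submodule ℂ X}
    (hV : V ≤ B.orthogonal V) (hW : W ≤ B.orthogonal W) (hVW : Codisjoint V W) :
    IsMaximalZeroSubspace (fun x => B x x) (B.orthogonal V) := by
  refine ⟨fun x hx => bilinForm_self_eq_zero_of_mem_orthogonal hB hV hW hVW hx, ?_⟩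
  intro Z hZ hVZ
  refine le_antisymm (fun z hz v hv => ?_) hVZ
  exact bilinForm_eq_zero_of_forall_self_eq_zero hB hZ (hVZ (hV hv)) hz

section Density

open Cardinal

lemma mk_prod_nat_le (α : Type u) : #(α × ℕ) ≤ max ℵ₀ #α :=
  calc #(α × ℕ) = #α * ℵ₀ := by simp
    _ ≤ max (max #α ℵ₀) ℵ₀ := mul_le_max _ _
    _ = max ℵ₀ #α := by rw [max_assoc, max_self, max_comm]

lemma densityChar_le_mk {X : Type u} [TopologicalSpace X] {s : Set X} (hs : Dense s) :
    densityChar X ≤ #s :=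
  csInf_le' ⟨s, hs, rfl⟩

lemma mk_le_densityChar_of_pairwise_le_dist {ι X : Type u} [PseudoMetricSpace X] {e : ι → X}
    {ε : ℝ} (hε : 0 < ε) (he : Pairwise fun i j => ε ≤ dist (e i) (e j)) :
    #ι ≤ densityChar X := by
  refine le_csInf ⟨_, Set.univ, dense_univ, rfl⟩ ?_
  rintro _ ⟨s, hs, rfl⟩
  choose f hfs hf using fun i => hs.exists_dist_lt (e i) (half_pos hε)
  refine mk_le_of_injective (f := fun i => (⟨f i, hfs i⟩ : s)) fun i j hij => ?_
  have hfij : f i = f j := congrArg Subtype.val hij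
  by_contra hne
  have hclose : dist (e i) (e j) < ε :=
    calc dist (e i) (e j) ≤ dist (e i) (f i) + dist (e j) (f i) := dist_triangle_right ..
      _ < ε / 2 + ε / 2 := add_lt_add (hf i) (hfij ▸ hf j)
      _ = ε := add_halves ε
  exact (he hne).not_gt hclose

lemma densityChar_le_of_subset_closure {X : Type u} [PseudoMetricSpace X] {s N : Set X}
    (hsN : s ⊆ closure N) : densityChar s ≤ max ℵ₀ #N := by
  let Q := {p : N × ℕ // ∃ y : s, dist (y : X) p.1 < 1 / (p.2 + 1 : ℝ)}
  choose f hf using fun q : Q => q.2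
  have hdense : Dense (Set.range f) := by
    refine Metric.dense_iff.mpr fun y r hr => ?_
    obtain ⟨n, hn⟩ := exists_nat_one_div_lt (half_pos hr)
    obtain ⟨d, hd, hyd⟩ := Metric.mem_closure_iff.mp (hsN y.2) _ Nat.one_div_pos_of_nat
    let q : Q := ⟨(⟨d, hd⟩, n), y, hyd⟩
    refine ⟨f q, ?_, q, rfl⟩
    calc dist (f q : X) y ≤ dist (f q : X) d + dist (y : X) d := dist_triangle_right ..
      _ < r / 2 + r / 2 := add_lt_add ((hf q).trans hn) (hyd.trans hn)
      _ = r := add_halves r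
  calc densityChar s ≤ #(Set.range f) := densityChar_le_mk hdense
    _ ≤ #Q := mk_range_le
    _ ≤ #(N × ℕ) := mk_subtype_le _
    _ ≤ max ℵ₀ #N := mk_prod_nat_le N

lemma mk_addSubmonoid_closure_le {M : Type u} [AddMonoid M] (s : Set M) :
    #(AddSubmonoid.closure s) ≤ max ℵ₀ #s := by
  rw [AddSubmonoid.closure_eq_mrange]
  exact mk_range_le.trans (mk_list_le_max s)

lemma exists_span_subset_closure (𝕜 : Type*) {E : Type u} [Semiring 𝕜] [TopologicalSpace 𝕜]
    [TopologicalSpace.SeparableSpace 𝕜] [AddCommMonoid E] [TopologicalSpace E] [ContinuousAdd E]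
    [Module 𝕜 E] [ContinuousSMul 𝕜 E] (s : Set E) :
    ∃ N : Set E, #N ≤ max ℵ₀ #s ∧ (Submodule.span 𝕜 s : Set E) ⊆ closure N := by
  let c : ℕ → 𝕜 := TopologicalSpace.denseSeq 𝕜
  let f : s × ℕ → E := fun p => c p.2 • (p.1 : E)
  let N : AddSubmonoid E := AddSubmonoid.closure (Set.range f)
  refine ⟨N, ?_, ?_⟩
  · have hrange : #(Set.range f) ≤ max ℵ₀ #s :=
      calc #(Set.range f) ≤ #(s × ℕ) := mk_range_le
        _ ≤ max ℵ₀ #s := mk_prod_nat_le s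
    exact (mk_addSubmonoid_closure_le _).trans (max_le (le_max_left _ _) hrange)
  · suffices h : (Submodule.span 𝕜 s).toAddSubmonoid ≤ N.topologicalClosure from h
    rw [Submodule.span_eq_closure, AddSubmonoid.closure_le]
    rintro _ ⟨a, -, v, hv, rfl⟩
    refine map_mem_closure (f := fun b : 𝕜 => b • v) (by fun_prop)
      (TopologicalSpace.denseRange_denseSeq 𝕜 a) ?_
    rintro _ ⟨n, rfl⟩
    exact AddSubmonoid.subset_closure ⟨(⟨v, hv⟩, n), rfl⟩

lemma densityChar_le_of_le_topologicalClosure_span {𝕜 : Type*} {E : Type u} [NormedField 𝕜]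
    [TopologicalSpace.SeparableSpace 𝕜] [SeminormedAddCommGroup E] [NormedSpace 𝕜 E]
    {s : Set E} {Y : Submodule 𝕜 E} (hY : Y ≤ (Submodule.span 𝕜 s).topologicalClosure) :
    densityChar Y ≤ max ℵ₀ #s := by
  obtain ⟨N, hN, hspan⟩ := exists_span_subset_closure 𝕜 s
  have hYN : (Y : Set E) ⊆ closure N :=
    Set.Subset.trans hY (closure_minimal hspan isClosed_closure)
  exact (densityChar_le_of_subset_closure hYN).trans (max_le (le_max_left _ _) hN)

end Density

namespace ell1

variable {Γ : Type u}

open Classical in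
/-- The standard unit vector `e i` of `ℓ₁(Γ)`. -/
def unitVector (i : Γ) : ell1 Γ :=
  lp.single 1 i 1

lemma unitVector_apply_self (i : Γ) : unitVector i i = 1 := by
  classical exact lp.single_apply_self 1 i 1

lemma unitVector_apply_of_ne {i j : Γ} (hij : j ≠ i) : unitVector i j = 0 := by
  classical exact lp.single_apply_ne 1 i 1 hij

lemma hasSum_smul_unitVector (x : ell1 Γ) : HasSum (fun i => x i • unitVector i) x := by
  classical
  have hsingle (i : Γ) : x i • unitVector i = lp.single 1 i (x i) := by
    rw [unitVector, ← lp.single_smul, smul_eq_mul, mul_one]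
  simpa only [hsingle] using lp.hasSum_single ENNReal.one_ne_top x

lemma one_le_dist_unitVector {i j : Γ} (hij : i ≠ j) :
    1 ≤ dist (unitVector i) (unitVector j) :=
  calc (1 : ℝ) = ‖(unitVector i - unitVector j) i‖ := by
        simp [unitVector_apply_self, unitVector_apply_of_ne hij]
    _ ≤ ‖unitVector i - unitVector j‖ := lp.norm_apply_le_norm one_ne_zero _ i
    _ = dist (unitVector i) (unitVector j) := (dist_eq_norm _ _).symm

/-- The subspace of the vectors of `ℓ₁(Γ)` that vanish outside `S`, a copy of `ℓ₁(S)`. -/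
def supported (S : Set Γ) : Submodule ℂ (ell1 Γ) :=
  ⨅ i ∈ Sᶜ, LinearMap.ker (lp.evalₗ (𝕜 := ℂ) (fun _ : Γ => ℂ) 1 i)

lemma mem_supported {S : Set Γ} {x : ell1 Γ} : x ∈ supported S ↔ ∀ i ∉ S, x i = 0 := by
  simp [supported]

lemma unitVector_mem_supported {S : Set Γ} {i : Γ} (hi : i ∈ S) :
    unitVector i ∈ supported S :=
  mem_supported.mpr fun _ hj => unitVector_apply_of_ne fun hji => hj (hji ▸ hi)

lemma supported_univ : supported (Set.univ : Set Γ) = ⊤ := by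
  simp [supported]

lemma codisjoint_supported_compl (S : Set Γ) : Codisjoint (supported S) (supported Sᶜ) := by
  refine Submodule.codisjoint_iff_exists_add_eq.mpr fun x => ?_
  have restriction_mem (T : Set Γ) : Memℓp (T.indicator x) 1 :=
    (lp.memℓp x).mono' fun i => norm_indicator_le_norm_self x i
  refine ⟨⟨_, restriction_mem S⟩, ⟨_, restriction_mem Sᶜ⟩, ?_, ?_, ?_⟩
  · exact mem_supported.mpr fun i hi => Set.indicator_of_notMem hi x
  · exact mem_supported.mpr fun i hi => Set.indicator_of_notMem hi x
  · exact lp.ext (Set.indicator_self_add_compl S x)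

lemma supported_le_topologicalClosure_span (S : Set Γ) :
    supported S ≤ (Submodule.span ℂ (unitVector '' S)).topologicalClosure := by
  intro x hx
  refine (Submodule.isClosed_topologicalClosure _).mem_of_tendsto (hasSum_smul_unitVector x)
    (.of_forall fun s => Submodule.sum_mem _ fun i _ => ?_)
  by_cases hi : i ∈ S
  · exact Submodule.smul_mem _ _
      (Submodule.le_topologicalClosure _ (Submodule.subset_span ⟨i, hi, rfl⟩))
  · simp [mem_supported.mp hx i hi]

open Cardinal in
lemma densityChar_le_of_le_supported {S : Set Γ} {Y : Submodule ℂ (ell1 Γ)}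
    (hY : Y ≤ supported S) : densityChar Y ≤ max ℵ₀ #S :=
  (densityChar_le_of_le_topologicalClosure_span
    (hY.trans (supported_le_topologicalClosure_span S))).trans
    (max_le_max le_rfl mk_image_le)

open Cardinal in
lemma densityChar_submodule_le [Infinite Γ] (Y : Submodule ℂ (ell1 Γ)) : densityChar Y ≤ #Γ := by
  have hY : Y ≤ supported Set.univ := le_top.trans_eq supported_univ.symm
  simpa using densityChar_le_of_le_supported hY

open Cardinal in
lemma mk_le_densityChar_of_supported_le {S : Set Γ} {Y : Submodule ℂ (ell1 Γ)}
    (hY : supported S ≤ Y) : #S ≤ densityChar Y :=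
  mk_le_densityChar_of_pairwise_le_dist
    (e := fun i : S => (⟨unitVector i, hY (unitVector_mem_supported i.2)⟩ : Y)) one_pos
    fun _ _ hij => one_le_dist_unitVector (Subtype.coe_ne_coe.mpr hij)

lemma bilin_eq_zero_of_mem_supported {B : ell1 Γ →L[ℂ] ell1 Γ →L[ℂ] ℂ} {S T : Set Γ}
    (hB : ∀ i ∈ S, ∀ j ∈ T, B (unitVector i) (unitVector j) = 0)
    {x y : ell1 Γ} (hx : x ∈ supported S) (hy : y ∈ supported T) : B x y = 0 := by
  have eq_zero {L : ell1 Γ →L[ℂ] ℂ} {R : Set Γ} (hL : ∀ i ∈ R, L (unitVector i) = 0)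
      {z : ell1 Γ} (hz : z ∈ supported R) : L z = 0 := by
    have hspan : Submodule.span ℂ (unitVector '' R) ≤ LinearMap.ker L.toLinearMap :=
      Submodule.span_le.mpr (Set.forall_mem_image.mpr hL)
    exact Submodule.topologicalClosure_minimal _ hspan L.isClosed_ker
      (supported_le_topologicalClosure_span R hz)
  have hBy (i : Γ) (hi : i ∈ S) : B.flip y (unitVector i) = 0 := eq_zero (hB i hi) hy
  exact eq_zero hBy hx

/-- The universal property of `ℓ₁(Γ)`: the operator sending the unit vectors to a bounded family
of vectors of a Banach space. -/
def lift {F : Type*} [NormedAddCommGroup F] [NormedSpace ℂ F] [CompleteSpace F] (f : Γ → F)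
    {C : ℝ} (hC : 0 ≤ C) (hf : ∀ i, ‖f i‖ ≤ C) : ell1 Γ →L[ℂ] F :=
  lp.tsumCLM ℂ Γ F ∘L lp.mapCLM 1 (fun i => ContinuousLinearMap.toSpanSingleton ℂ (f i)) hC
    (fun i => (ContinuousLinearMap.norm_toSpanSingleton (f i)).trans_le (hf i))

section Lift

variable {F : Type*} [NormedAddCommGroup F] [NormedSpace ℂ F] [CompleteSpace F] {f : Γ → F}
  {C : ℝ} (hC : 0 ≤ C) (hf : ∀ i, ‖f i‖ ≤ C)

lemma lift_apply (x : ell1 Γ) : lift f hC hf x = ∑' i, x i • f i :=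
  rfl

lemma lift_unitVector (i : Γ) : lift f hC hf (unitVector i) = f i := by
  rw [lift_apply, tsum_eq_single i, unitVector_apply_self, one_smul]
  intro j hj
  rw [unitVector_apply_of_ne hj, zero_smul]

lemma norm_lift_le : ‖lift f hC hf‖ ≤ C :=
  calc ‖lift f hC hf‖ ≤ 1 * C := by
        refine (ContinuousLinearMap.opNorm_comp_le _ _).trans ?_
        gcongr
        · exact lp.norm_tsumCLM_le
        · exact lp.norm_mapCLM_le 1 _ hC _
    _ = C := one_mul C

end Lift

variable (G : SimpleGraph Γ)

/-- The functional `x ↦ ∑ x j` on `ℓ₁(Γ)`, where `j` runs over the neighbors of the vertex `i`. -/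
def neighborSum (i : Γ) : ell1 Γ →L[ℂ] ℂ :=
  lift ((G.neighborSet i).indicator 1) zero_le_one
    fun j => (norm_indicator_le_norm_self (1 : Γ → ℂ) j).trans norm_one.le

lemma neighborSum_apply (i : Γ) (x : ell1 Γ) :
    neighborSum G i x = ∑' j : G.neighborSet i, x j := by
  rw [tsum_subtype, neighborSum, lift_apply]
  congr! 2 with j
  by_cases hj : j ∈ G.neighborSet i <;> simp [hj]

/-- The bilinear form on `ℓ₁(Γ)` whose matrix is the adjacency matrix of the graph `G`. -/
def adjacencyForm : ell1 Γ →L[ℂ] ell1 Γ →L[ℂ] ℂ :=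
  lift (neighborSum G) zero_le_one fun _ => norm_lift_le _ _

lemma adjacencyForm_unitVector (i : Γ) : adjacencyForm G (unitVector i) = neighborSum G i :=
  lift_unitVector _ _ i

lemma adjacencyForm_unitVector_unitVector (i j : Γ) :
    adjacencyForm G (unitVector i) (unitVector j) = (G.neighborSet i).indicator 1 j := by
  rw [adjacencyForm_unitVector, neighborSum, lift_unitVector]

lemma adjacencyForm_comm (x y : ell1 Γ) : adjacencyForm G x y = adjacencyForm G y x := by
  have hunit (i : Γ) (_ : i ∈ Set.univ) (j : Γ) (_ : j ∈ Set.univ) :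
      (adjacencyForm G - (adjacencyForm G).flip) (unitVector i) (unitVector j) = 0 := by
    classical
    simp [adjacencyForm_unitVector_unitVector, Set.indicator_apply, G.adj_comm]
  refine sub_eq_zero.mp (bilin_eq_zero_of_mem_supported hunit (x := x) (y := y) ?_ ?_) <;>
    simp [supported_univ]

lemma adjacencyForm_isSymm : (adjacencyForm G).toBilinForm.IsSymm :=
  ⟨adjacencyForm_comm G⟩

variable {G}

lemma supported_le_orthogonal {S : Set Γ} (hS : G.IsIndepSet S) :
    supported S ≤ (adjacencyForm G).toBilinForm.orthogonal (supported S) := by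
  intro y hy x hx
  refine bilin_eq_zero_of_mem_supported (B := adjacencyForm G) (fun i hi j hj => ?_) hx hy
  rw [adjacencyForm_unitVector_unitVector]
  exact Set.indicator_of_notMem (fun hij : G.Adj i j => hS hi hj hij.ne hij) _

end ell1

/-- Every point of `t` can be separated by a member of the family `U` from any finite set that does
not contain it. -/
def SeparatesFromFinsets {ι α : Type*} (U : ι → Set α) (t : Set α) : Prop :=
  ∀ c ∈ t, ∀ F : Finset α, c ∉ F → ∃ i, c ∈ U i ∧ Disjoint (U i) F

lemma eq_zero_of_separatesFromFinsets_of_tsum_eq_zero {ι α E : Type*} [AddCommGroup E]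
    [UniformSpace E] [IsUniformAddGroup E] [CompleteSpace E] [T2Space E] {U : ι → Set α}
    {t : Set α} (hU : SeparatesFromFinsets U t) {f : α → E} (hf : Summable f)
    (hsum : ∀ i, ∑' j : U i, f j = 0) {c : α} (hc : c ∈ t) : f c = 0 := by
  classical
  by_contra hfc
  obtain ⟨F, hF⟩ := summable_iff_tsum_vanishing.mp hf {-f c}ᶜ
    (isOpen_compl_singleton.mem_nhds (by simpa using hfc))
  obtain ⟨i, hci, hdisj⟩ := hU c hc (F.erase c) (F.notMem_erase c)
  have hdiff : Disjoint (U i \ {c}) F := by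
    rw [Set.disjoint_left]
    rintro j ⟨hj, hjc⟩ hjF
    exact Set.disjoint_left.mp hdisj hj (by simpa [hjF] using hjc)
  have hsplit : f c + ∑' j : ↥(U i \ {c}), f j = 0 := by
    have hunion : {c} ∪ U i \ {c} = U i :=
      Set.union_sdiff_cancel (Set.singleton_subset_iff.mpr hci)
    calc f c + ∑' j : ↥(U i \ {c}), f j
        = ∑' j : ({c} : Set α), f j + ∑' j : ↥(U i \ {c}), f j := by rw [tsum_singleton]
      _ = ∑' j : ↥({c} ∪ U i \ {c}), f j :=
        ((hf.subtype _).tsum_union_disjoint Set.disjoint_sdiff_right (hf.subtype _)).symm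
      _ = 0 := by rw [hunion, hsum i]
  exact hF _ hdiff (neg_eq_of_add_eq_zero_right hsplit).symm

section Existence

open Cardinal

lemma exists_separatesFromFinsets_univ {ι α : Type u} [Infinite ι] (hα : #α ≤ 2 ^ #ι) :
    ∃ U : ι → Set α, SeparatesFromFinsets U Set.univ := by
  classical
  obtain ⟨g⟩ : Nonempty (α ↪ Set ι) := by rwa [← mk_set] at hα
  obtain ⟨e⟩ : Nonempty (ι ≃ Finset ι × Finset ι) := by
    rw [← Cardinal.eq]
    simp
  let cylinder (p : Finset ι × Finset ι) : Set α := {d | g d ∩ p.1 = p.2}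
  refine ⟨cylinder ∘ e, fun c _ F hcF => ?_⟩
  have hdistinct (d : F) : ∃ k, ¬(k ∈ g d ↔ k ∈ g c) := by
    by_contra! hcd
    exact hcF (g.injective (Set.ext hcd) ▸ d.2)
  choose k hk using hdistinct
  let T : Finset ι := Finset.univ.image k
  refine ⟨e.symm (T, T.filter (· ∈ g c)), ?_, Set.disjoint_left.mpr fun d hd hdF => ?_⟩
  · simp [cylinder, Set.ext_iff, and_comm]
  · have hcylinder : g d ∩ T = (T.filter (· ∈ g c) : Finset ι) := by simpa [cylinder] using hd
    have hkT : k ⟨d, hdF⟩ ∈ T := Finset.mem_image_of_mem k (Finset.mem_univ _)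
    refine hk ⟨d, hdF⟩ ?_
    simpa [hkT] using Set.ext_iff.mp hcylinder (k ⟨d, hdF⟩)

lemma exists_graph_isIndepSet_separatesFromFinsets {Γ : Type u} {S : Set Γ} [Infinite S]
    (hΓ : #Γ ≤ 2 ^ #S) :
    ∃ G : SimpleGraph Γ, G.IsIndepSet S ∧ G.IsIndepSet Sᶜ ∧
      SeparatesFromFinsets (fun i : S => G.neighborSet i) Sᶜ := by
  obtain ⟨U, hU⟩ := exists_separatesFromFinsets_univ hΓ
  let G : SimpleGraph Γ := .fromRel fun i j => ∃ hi : i ∈ S, j ∉ S ∧ j ∈ U ⟨i, hi⟩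
  have hneighbor (i : S) : G.neighborSet i = U i \ S := by
    ext j
    have hij : j ∉ S → (i : Γ) ≠ j := fun hj h => hj (h ▸ i.2)
    simp only [G, SimpleGraph.mem_neighborSet, SimpleGraph.fromRel_adj, Subtype.coe_eta,
      Subtype.coe_prop, exists_const, exists_and_left, not_true_eq_false, false_and, or_false,
      Set.mem_sdiff]
    tauto
  refine ⟨G, ?_, ?_, fun c hc F hcF => ?_⟩
  · rintro i hi j hj - ⟨-, ⟨-, hjS, -⟩ | ⟨-, hiS, -⟩⟩
    exacts [hjS hj, hiS hi]
  · rintro i hi j hj - ⟨-, ⟨hiS, -⟩ | ⟨hjS, -⟩⟩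
    exacts [hi hiS, hj hjS]
  · obtain ⟨i, hci, hdisj⟩ := hU c trivial F hcF
    exact ⟨i, (hneighbor i).ge ⟨hci, hc⟩,
      hdisj.mono_left ((hneighbor i).trans_subset Set.sdiff_subset)⟩

lemma max_succ_power_aleph0_le_two_power {κ : Cardinal.{u}} (hκ : ℵ₀ ≤ κ) :
    max (Order.succ κ) (κ ^ ℵ₀) ≤ 2 ^ κ := by
  refine max_le (Order.succ_le_of_lt (cantor κ)) ?_
  calc κ ^ ℵ₀ ≤ κ ^ κ := power_le_power_left (aleph0_pos.trans_le hκ).ne' hκ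
    _ = 2 ^ κ := power_self_eq hκ

end Existence

lemma ell1.orthogonal_supported_eq {Γ : Type u} {G : SimpleGraph Γ} {S : Set Γ}
    (hS : G.IsIndepSet S) (hsep : SeparatesFromFinsets (fun i : S => G.neighborSet i) Sᶜ) :
    (adjacencyForm G).toBilinForm.orthogonal (supported S) = supported S := by
  refine le_antisymm (fun x hx => mem_supported.mpr fun c hc => ?_) (supported_le_orthogonal hS)
  refine eq_zero_of_separatesFromFinsets_of_tsum_eq_zero hsep (lp.memℓp x).summable_of_one
    (fun i => ?_) hc
  rw [← neighborSum_apply, ← adjacencyForm_unitVector]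
  exact hx _ (unitVector_mem_supported i.2)

open Cardinal in
theorem exists_quadratic_with_maximal_zero_subspaces_of_two_densities_general
    {κ : Cardinal.{u}} (hκ : ℵ₀ ≤ κ) {Γ : Type u} (hκΓ : κ < #Γ) (hΓκ : #Γ ≤ 2 ^ κ) :
    ∃ B : ell1 Γ →L[ℂ] ell1 Γ →L[ℂ] ℂ,
      (∀ x y : ell1 Γ, B x y = B y x) ∧
      ∃ Y₁ Y₂ : Submodule ℂ (ell1 Γ),
        IsMaximalZeroSubspace (fun x => B x x) Y₁ ∧
        IsMaximalZeroSubspace (fun x => B x x) Y₂ ∧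
        densityChar Y₁ = κ ∧ densityChar Y₂ = #Γ := by
  obtain ⟨S, rfl⟩ := le_mk_iff_exists_set.mp hκΓ.le
  have : Infinite S := infinite_iff.mpr hκ
  have : Infinite Γ := infinite_iff.mpr (hκ.trans hκΓ.le)
  obtain ⟨G, hS, hSc, hsep⟩ := exists_graph_isIndepSet_separatesFromFinsets hΓκ
  have hsymm := ell1.adjacencyForm_isSymm G
  have hS_le := ell1.supported_le_orthogonal hS
  have hSc_le := ell1.supported_le_orthogonal hSc
  have hcodisj := ell1.codisjoint_supported_compl S
  refine ⟨ell1.adjacencyForm G, ell1.adjacencyForm_comm G, _, _,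
    isMaximalZeroSubspace_orthogonal hsymm hS_le hSc_le hcodisj,
    isMaximalZeroSubspace_orthogonal hsymm hSc_le hS_le hcodisj.symm, ?_, ?_⟩
  · have hle := ell1.densityChar_le_of_le_supported (ell1.orthogonal_supported_eq hS hsep).le
    rw [max_eq_right hκ] at hle
    exact hle.antisymm (ell1.mk_le_densityChar_of_supported_le hS_le)
  · refine (ell1.densityChar_submodule_le _).antisymm ?_
    exact (mk_compl_of_infinite S hκΓ).ge.trans (ell1.mk_le_densityChar_of_supported_le hSc_le)

/-- For every infinite cardinal `κ`, with `τ = max (κ⁺, κ^ℵ₀)`, there is a continuous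
quadratic functional on `ℓ₁(τ)` (i.e., `x ↦ B x x` for a continuous symmetric bilinear form
`B`) having a maximal zero subspace of density `κ` and another maximal zero subspace of
density `τ`. -/
theorem exists_quadratic_with_maximal_zero_subspaces_of_two_densities
    (κ : Cardinal.{u}) (hκ : Cardinal.aleph0 ≤ κ)
    (Γ : Type u)
    (hΓ : Cardinal.mk Γ = max (Order.succ κ) (κ ^ Cardinal.aleph0)) :
    ∃ B : ell1 Γ →L[ℂ] ell1 Γ →L[ℂ] ℂ,
      (∀ x y : ell1 Γ, B x y = B y x) ∧
      ∃ Y₁ Y₂ : Submodule ℂ (ell1 Γ),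
        IsMaximalZeroSubspace (fun x => B x x) Y₁ ∧
        IsMaximalZeroSubspace (fun x => B x x) Y₂ ∧
        densityChar ↥Y₁ = κ ∧
        densityChar ↥Y₂ = max (Order.succ κ) (κ ^ Cardinal.aleph0) := by
  rw [← hΓ]
  exact exists_quadratic_with_maximal_zero_subspaces_of_two_densities_general hκ
    ((Order.lt_succ κ).trans_le ((le_max_left _ _).trans hΓ.ge))
    (hΓ.trans_le (max_succ_power_aleph0_le_two_power hκ))

end
end

section
/- If a well-ordered set Γ admits a partition of the first kind f : [Γ]² → {0,1}, then the cardinality of Γ is at most 2^{ℵ₀}. -/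
noncomputable section

universe u

/-- `f : [Γ]² → 2` is a *partition of the first kind* if for every uncountable family `A` of
pairwise disjoint subsets of `Γ`, all of some fixed finite cardinality `n` (such a subset is
encoded by the strictly monotone enumeration `Fin n → Γ` of its elements), and for every
`k < n`, there exist `a, b, a', b' ∈ A` with `a ≠ b`, `a' ≠ b'` such that
`f {a(k), b(k)} = 1`, `f {a'(k), b'(k)} = 0`, and `f {a(i), b(j)} = f {a'(i), b'(j)}`
whenever `(i, j) ≠ (k, k)`. -/
def IsPartitionFirstKind {Γ : Type u} [LinearOrder Γ] (f : Sym2 Γ → Fin 2) : Prop :=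
  ∀ (n : ℕ) (A : Set (Fin n → Γ)),
    ¬ A.Countable →
    (∀ a ∈ A, StrictMono a) →
    (A.Pairwise fun a b => Disjoint (Set.range a) (Set.range b)) →
    ∀ k : Fin n,
      ∃ a ∈ A, ∃ b ∈ A, ∃ a' ∈ A, ∃ b' ∈ A,
        a ≠ b ∧ a' ≠ b' ∧
        f s(a k, b k) = 1 ∧ f s(a' k, b' k) = 0 ∧
        ∀ i j : Fin n, (i, j) ≠ (k, k) → f s(a i, b j) = f s(a' i, b' j)

/-!
Taking `n = 1` in the definition shows that a partition of the first kind has only countable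
homogeneous sets, so the theorem is the case `κ = ℵ₀` of the Erdős–Rado theorem
`(2 ^ κ)⁺ → (κ⁺)²_κ`.

To prove the latter, well-order `Γ` and say that `y` lies below `x` in the *Erdős–Rado tree* if
`y < x` and `f {z, y} = f {z, x}` for all `z < y` that are themselves below `x`. The points `y`
below `x` with `f {y, x} = c` form a homogeneous set of color `c`, hence there are at most `κ`
points below `x`. On the other hand `x` can be recovered from the isomorphism type of the set of
points below it, ordered as in `Γ` and colored by `y ↦ f {y, x}`, and there are at most `2 ^ κ`
such types.
-/

universe v

open Cardinal

section ErdosRadoTree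

/-- The strict order of the Erdős–Rado tree of the coloring `f`: the points `y` below `x` are
selected by recursion along `<`, keeping `y` when it cannot be told apart from `x` by its colors
to the points already selected. The values of `f` on the diagonal are never consulted. -/
def ErdosRadoLT {Γ : Type u} [LinearOrder Γ] [WellFoundedLT Γ] {C : Type v}
    (f : Sym2 Γ → C) (y x : Γ) : Prop :=
  y < x ∧ ∀ z < y, ErdosRadoLT f z x → f s(z, y) = f s(z, x)
termination_by wellFounded_lt.wrap y

variable {Γ : Type u} [LinearOrder Γ] [WellFoundedLT Γ] {C : Type v}
  {f : Sym2 Γ → C} {x x' y z : Γ}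

theorem erdosRadoLT_iff :
    ErdosRadoLT f y x ↔ y < x ∧ ∀ z < y, ErdosRadoLT f z x → f s(z, y) = f s(z, x) := by
  rw [ErdosRadoLT]

theorem ErdosRadoLT.lt (h : ErdosRadoLT f y x) : y < x :=
  (erdosRadoLT_iff.1 h).1

theorem ErdosRadoLT.color_eq (hy : ErdosRadoLT f y x) (hz : ErdosRadoLT f z x) (hzy : z < y) :
    f s(z, y) = f s(z, x) :=
  (erdosRadoLT_iff.1 hy).2 z hzy hz

theorem ErdosRadoLT.iff_of_lt (hy : ErdosRadoLT f y x) (hzy : z < y) :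
    ErdosRadoLT f z y ↔ ErdosRadoLT f z x := by
  induction z using WellFoundedLT.induction with
  | ind z ih =>
    rw [erdosRadoLT_iff, erdosRadoLT_iff (x := x)]
    refine and_congr (iff_of_true hzy (hzy.trans hy.lt)) (forall₂_congr fun w hwz => ?_)
    have hwy : w < y := hwz.trans hzy
    rw [ih w hwz hwy]
    exact forall_congr' fun hw => by rw [hy.color_eq hw hwy]

theorem ErdosRadoLT.iff_and_lt (hy : ErdosRadoLT f y x) :
    ErdosRadoLT f z y ↔ ErdosRadoLT f z x ∧ z < y :=
  ⟨fun hz => ⟨(hy.iff_of_lt hz.lt).1 hz, hz.lt⟩, fun hz => (hy.iff_of_lt hz.2).2 hz.1⟩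

theorem eq_of_erdosRadoLT_iff (hpred : ∀ z, ErdosRadoLT f z x ↔ ErdosRadoLT f z x')
    (hcolor : ∀ z, ErdosRadoLT f z x → f s(z, x) = f s(z, x')) : x = x' := by
  wlog hlt : x < x' generalizing x x'
  · by_contra hne
    exact hne (this (fun z => (hpred z).symm) (fun z hz => (hcolor z ((hpred z).2 hz)).symm)
      ((not_lt.1 hlt).lt_of_ne' hne)).symm
  have hx : ErdosRadoLT f x x' :=
    erdosRadoLT_iff.2 ⟨hlt, fun z _ hz => hcolor z ((hpred z).2 hz)⟩
  exact absurd ((hpred x).2 hx).lt (lt_irrefl x)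

theorem erdosRadoLT_orderIso_apply
    (φ : {y // ErdosRadoLT f y x} ≃o {y // ErdosRadoLT f y x'})
    (hφ : ∀ y, f s((φ y : Γ), x') = f s((y : Γ), x)) (y : {y // ErdosRadoLT f y x}) :
    (φ y : Γ) = y := by
  induction y using WellFoundedLT.induction with
  | ind y ih =>
    have hpred (z : Γ) : ErdosRadoLT f z y ↔ ErdosRadoLT f z (φ y) := by
      rw [y.2.iff_and_lt, (φ y).2.iff_and_lt]
      constructor
      · rintro ⟨hz, hzy⟩
        have hfix : (φ ⟨z, hz⟩ : Γ) = z := ih ⟨z, hz⟩ hzy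
        rw [← hfix]
        exact ⟨(φ ⟨z, hz⟩).2, φ.lt_iff_lt.2 hzy⟩
      · rintro ⟨hz, hzy⟩
        have hlt : φ.symm ⟨z, hz⟩ < y := φ.symm_apply_lt.2 hzy
        have hfix : z = φ.symm ⟨z, hz⟩ := by simpa using ih _ hlt
        rw [hfix]
        exact ⟨(φ.symm ⟨z, hz⟩).2, hlt⟩
    refine (eq_of_erdosRadoLT_iff hpred fun z hzy => ?_).symm
    obtain ⟨hz, hlt⟩ := y.2.iff_and_lt.1 hzy
    obtain ⟨hz', hlt'⟩ := (φ y).2.iff_and_lt.1 ((hpred z).1 hzy)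
    calc f s(z, y) = f s(z, x) := y.2.color_eq hz hlt
      _ = f s((φ ⟨z, hz⟩ : Γ), x') := (hφ ⟨z, hz⟩).symm
      _ = f s(z, x') := by rw [ih ⟨z, hz⟩ hlt]
      _ = f s(z, φ y) := ((φ y).2.color_eq hz' hlt').symm

theorem eq_of_erdosRadoLT_orderIso
    (φ : {y // ErdosRadoLT f y x} ≃o {y // ErdosRadoLT f y x'})
    (hφ : ∀ y, f s((φ y : Γ), x') = f s((y : Γ), x)) : x = x' := by
  have hfix := erdosRadoLT_orderIso_apply φ hφ
  refine eq_of_erdosRadoLT_iff (f := f) (fun z => ⟨fun hz => ?_, fun hz => ?_⟩) fun z hz => ?_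
  · have hz_fix : (φ ⟨z, hz⟩ : Γ) = z := hfix ⟨z, hz⟩
    exact hz_fix ▸ (φ ⟨z, hz⟩).2
  · have hz_fix : z = φ.symm ⟨z, hz⟩ := by simpa using hfix (φ.symm ⟨z, hz⟩)
    exact hz_fix ▸ (φ.symm ⟨z, hz⟩).2
  · rw [← hφ ⟨z, hz⟩, hfix]

theorem pairwise_color_eq_of_erdosRadoLT (f : Sym2 Γ → C) (x : Γ) (c : C) :
    {y | ErdosRadoLT f y x ∧ f s(y, x) = c}.Pairwise fun y z => f s(y, z) = c := by
  rintro y ⟨hy, hyc⟩ z ⟨hz, hzc⟩ hne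
  rcases hne.lt_or_gt with hlt | hlt
  · exact (hz.color_eq hy hlt).trans hyc
  · rw [Sym2.eq_swap]
    exact (hy.color_eq hz hlt).trans hzc

theorem mk_erdosRadoLT_le {κ : Cardinal.{u}} (hκ : ℵ₀ ≤ κ) (hC : lift.{u} #C ≤ lift.{v} κ)
    (hf : ∀ (c : C) (H : Set Γ), (H.Pairwise fun y z => f s(y, z) = c) → #H ≤ κ) (x : Γ) :
    #{y // ErdosRadoLT f y x} ≤ κ := by
  let color (y : {y // ErdosRadoLT f y x}) : C := f s((y : Γ), x)
  have hfiber (c : C) : #(color ⁻¹' {c}) ≤ κ := by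
    rw [← mk_image_eq Subtype.val_injective]
    refine hf c _ ((pairwise_color_eq_of_erdosRadoLT f x c).mono ?_)
    rintro _ ⟨y, hyc, rfl⟩
    exact ⟨y.2, hyc⟩
  rw [← lift_le.{v}]
  calc lift.{v} #{y // ErdosRadoLT f y x}
      ≤ lift.{u} #C * lift.{v} κ :=
        lift_mk_le_lift_mk_mul_of_lift_mk_preimage_le color fun c => lift_le.2 (hfiber c)
    _ ≤ lift.{v} κ * lift.{v} κ := by gcongr
    _ = lift.{v} κ := by rw [← lift_mul, mul_eq_self hκ]

end ErdosRadoTree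

section ColoredOrderCode

variable {K C L M : Type*} [LE L] [LE M]

/-- The order relation and the coloring `c` of `L`, transported to `K` along `g`. When `g` is
injective this determines `(L, ≤, c)` up to isomorphism, which bounds the number of colored
orders that embed into `K` as sets. -/
def coloredOrderCode (g : L → K) (c : L → C) : Set (K × K) × Set (K × C) :=
  (Prod.map g g '' {p | p.1 ≤ p.2}, Set.range fun y => (g y, c y))

theorem exists_orderIso_of_coloredOrderCode_eq {g : L → K} {h : M → K} {c : L → C} {d : M → C}
    (hg : g.Injective) (hh : h.Injective) (hcode : coloredOrderCode g c = coloredOrderCode h d) :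
    ∃ φ : L ≃o M, ∀ y, d (φ y) = c y := by
  have hrange : Set.range g = Set.range h := by
    simpa only [coloredOrderCode, ← Set.range_comp] using! congrArg (Prod.fst '' ·.2) hcode
  let e : L ≃ M :=
    (Equiv.ofInjective g hg).trans ((Equiv.setCongr hrange).trans (Equiv.ofInjective h hh).symm)
  have he (y : L) : h (e y) = g y := Equiv.apply_ofInjective_symm hh _
  refine ⟨⟨e, fun {y z} => ?_⟩, fun y => ?_⟩
  · calc e y ≤ e z ↔ (h (e y), h (e z)) ∈ (coloredOrderCode h d).1 :=
          ((hh.prodMap hh).mem_set_image (s := {p | p.1 ≤ p.2}) (a := (e y, e z))).symm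
      _ ↔ (g y, g z) ∈ (coloredOrderCode g c).1 := by rw [he, he, hcode]
      _ ↔ y ≤ z := (hg.prodMap hg).mem_set_image (a := (y, z))
  · have hmem : (g y, c y) ∈ (coloredOrderCode h d).2 := hcode ▸ Set.mem_range_self y
    obtain ⟨z, hz⟩ := hmem
    obtain ⟨hzy, hzc⟩ := Prod.ext_iff.1 hz
    have hez : z = e y := hh (hzy.trans (he y).symm)
    exact hez ▸ hzc

end ColoredOrderCode

/-- The contrapositive of the Erdős–Rado theorem `(2 ^ κ)⁺ → (κ⁺)²_κ`. -/
theorem mk_le_two_power_of_forall_pairwise_mk_le {Γ : Type u} {C : Type v} {κ : Cardinal.{u}}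
    (hκ : ℵ₀ ≤ κ) (hC : lift.{u} #C ≤ lift.{v} κ) (f : Sym2 Γ → C)
    (hf : ∀ (c : C) (H : Set Γ), (H.Pairwise fun y z => f s(y, z) = c) → #H ≤ κ) :
    #Γ ≤ 2 ^ κ := by
  obtain ⟨_, _⟩ := exists_wellFoundedLT Γ
  induction κ using Cardinal.inductionOn with
  | mk K =>
    obtain ⟨e⟩ := lift_mk_le'.1 hC
    have hembed (x : Γ) : Nonempty ({y // ErdosRadoLT f y x} ↪ K) := mk_erdosRadoLT_le hκ hC hf x
    let g (x : Γ) : {y // ErdosRadoLT f y x} ↪ K := (hembed x).some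
    let code (x : Γ) : Set (K × K) × Set (K × K) :=
      coloredOrderCode (g x) fun y => e (f s((y : Γ), x))
    have hcode : code.Injective := fun x x' hxx' => by
      obtain ⟨φ, hφ⟩ :=
        exists_orderIso_of_coloredOrderCode_eq (g x).injective (g x').injective hxx'
      exact eq_of_erdosRadoLT_orderIso φ fun y => e.injective (hφ y)
    calc #Γ ≤ #(Set (K × K) × Set (K × K)) := mk_le_of_injective hcode
      _ = 2 ^ (#K * #K) * 2 ^ (#K * #K) := by simp only [mk_prod, mk_set, lift_id]
      _ = 2 ^ #K := by rw [← power_add, mul_eq_self hκ, add_eq_self hκ]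

theorem IsPartitionFirstKind.countable_of_pairwise {Γ : Type u} [LinearOrder Γ]
    {f : Sym2 Γ → Fin 2} (hf : IsPartitionFirstKind f) {c : Fin 2} {H : Set Γ}
    (hH : H.Pairwise fun y z => f s(y, z) = c) : H.Countable := by
  by_contra hunc
  let point (y : Γ) : Fin 1 → Γ := fun _ => y
  have hpoint : point.Injective := Function.const_injective
  have hmono : ∀ a ∈ point '' H, StrictMono a := fun a _ => Subsingleton.strictMono a
  have hdisj : (point '' H).Pairwise fun a b => Disjoint (Set.range a) (Set.range b) := by
    rintro _ ⟨y, _, rfl⟩ _ ⟨z, _, rfl⟩ hne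
    simpa [point] using fun h : y = z => hne (congrArg point h)
  obtain ⟨_, ⟨y, hy, rfl⟩, _, ⟨z, hz, rfl⟩, _, ⟨y', hy', rfl⟩, _, ⟨z', hz', rfl⟩,
      hyz, hyz', hone, hzero, -⟩ :=
    hf 1 (point '' H) (mt (Set.countable_of_injective_of_countable_image hpoint.injOn) hunc)
      hmono hdisj 0
  have hc_one : c = 1 := (hH hy hz (ne_of_apply_ne point hyz)).symm.trans hone
  have hc_zero : c = 0 := (hH hy' hz' (ne_of_apply_ne point hyz')).symm.trans hzero
  exact one_ne_zero (hc_one.symm.trans hc_zero)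

theorem card_le_continuum_of_partition_first_kind_general {Γ : Type u} [LinearOrder Γ]
    (f : Sym2 Γ → Fin 2) (hf : IsPartitionFirstKind f) : #Γ ≤ continuum := by
  rw [← two_power_aleph0]
  refine mk_le_two_power_of_forall_pairwise_mk_le le_rfl ?_ f fun c H hH => ?_
  · simp
  · exact (hf.countable_of_pairwise hH).le_aleph0

/-- If a well-ordered set `Γ` admits a partition of the first kind `f : [Γ]² → 2`, then the
cardinality of `Γ` is at most `2^ℵ₀`. -/
theorem card_le_continuum_of_partition_first_kind
    {Γ : Type u} [LinearOrder Γ] [WellFoundedLT Γ]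
    (f : Sym2 Γ → Fin 2) (hf : IsPartitionFirstKind f) :
    Cardinal.mk Γ ≤ Cardinal.continuum := by
  exact card_le_continuum_of_partition_first_kind_general f hf

end
end
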